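/- Let P be a classical propositional formula of degree d, let Φ be a proof in LKp of the sequent Γ ⊢ Δ and Φ' a proof in LKp of the sequent Γ' ⊢ Δ', both of degree strictly less than d. Then there exists a proof Ψ in LKp of the sequent Γ, Γ'∖P ⊢ Δ∖P, Δ' whose degree is strictly less than d, where Λ∖P denotes the list Λ with all occurrences of the formula P removed. -/

import Mathlib

/-!
The proof is semantic. Every formula has degree at least `1`, so it is enough to find a proof of
the target sequent without any cut. Proofs in LKp are sound for two-valued semantics
(`Deriv.sound`), so `Γ ⊢ Δ` and `Γ' ⊢ Δ'` are valid. Then `Γ, Γ'∖P ⊢ Δ∖P, Δ'` is valid too: under a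
given valuation either `P` is false, and the first sequent makes a formula of `Δ∖P` true, or `P` is
true, and the second sequent makes a formula of `Δ'` true.

Finally, cut-free LKp is complete (`prov_of_valid`). The structural rules make cut-free
provability monotone in the two sides viewed as sets (`Prov.mono`), so that contexts can be shared
and the logical rules take their invertible form. Reading those rules upwards preserves validity
and strictly decreases the number of connectives; a valid sequent consisting of atoms only has an
atom common to both sides, and follows from an axiom by weakening.
-/

/-!
The system LKp: the propositional fragment of Gentzen's sequent calculus LK.
Sequents are pairs of finite lists of formulas.  In the rules below, a list
written `Γ, P` in the paper is encoded as `Γ ++ [P]` on the left of the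
turnstile and as `P :: Δ` on the right (matching the usual presentation
`Γ ⊢ P, Δ`).
-/

namespace LKp

/-- Classical propositional formulas over countably many atoms. -/
inductive Formula : Type where
  | atom : ℕ → Formula
  | neg  : Formula → Formula
  | and  : Formula → Formula → Formula
  | or   : Formula → Formula → Formula
  | imp  : Formula → Formula → Formula
deriving DecidableEq

/-- A sequent `Γ ⊢ Δ` is a pair of finite lists of formulas. -/
abbrev Sequent := List Formula × List Formula

/-- The degree of a formula: `δ(a) = 1`, `δ(¬P) = 1 + δ(P)`,
`δ(P∧Q) = δ(P∨Q) = δ(P→Q) = 1 + max(δ(P), δ(Q))`. -/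
def Formula.degree : Formula → ℕ
  | .atom _ => 1
  | .neg P => P.degree + 1
  | .and P Q => max P.degree Q.degree + 1
  | .or P Q => max P.degree Q.degree + 1
  | .imp P Q => max P.degree Q.degree + 1

/-- Derivations in LKp: trees of rule instances, with `hyp` marking an open
leaf (a premise of the derivation). -/
inductive Deriv : Sequent → Type where
  | hyp (S : Sequent) : Deriv S
  | ax (P : Formula) : Deriv ([P], [P])
  | permL (Γ Γ' Δ : List Formula) (P Q : Formula) :
      Deriv (Γ ++ P :: Q :: Γ', Δ) → Deriv (Γ ++ Q :: P :: Γ', Δ)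
  | permR (Γ Δ Δ' : List Formula) (P Q : Formula) :
      Deriv (Γ, Δ ++ P :: Q :: Δ') → Deriv (Γ, Δ ++ Q :: P :: Δ')
  | contL (Γ Δ : List Formula) (P : Formula) :
      Deriv (Γ ++ [P, P], Δ) → Deriv (Γ ++ [P], Δ)
  | contR (Γ Δ : List Formula) (Q : Formula) :
      Deriv (Γ, Q :: Q :: Δ) → Deriv (Γ, Q :: Δ)
  | weakL (Γ Δ : List Formula) (P : Formula) :
      Deriv (Γ, Δ) → Deriv (Γ ++ [P], Δ)
  | weakR (Γ Δ : List Formula) (Q : Formula) :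
      Deriv (Γ, Δ) → Deriv (Γ, Q :: Δ)
  | cut (Γ Δ Γ' Δ' : List Formula) (P : Formula) :
      Deriv (Γ, P :: Δ) → Deriv (Γ' ++ [P], Δ') → Deriv (Γ ++ Γ', Δ ++ Δ')
  | andL1 (Γ Δ : List Formula) (P Q : Formula) :
      Deriv (Γ ++ [P], Δ) → Deriv (Γ ++ [P.and Q], Δ)
  | andL2 (Γ Δ : List Formula) (P Q : Formula) :
      Deriv (Γ ++ [Q], Δ) → Deriv (Γ ++ [P.and Q], Δ)
  | andR (Γ Δ : List Formula) (P Q : Formula) :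
      Deriv (Γ, P :: Δ) → Deriv (Γ, Q :: Δ) → Deriv (Γ, (P.and Q) :: Δ)
  | orR1 (Γ Δ : List Formula) (P Q : Formula) :
      Deriv (Γ, P :: Δ) → Deriv (Γ, (P.or Q) :: Δ)
  | orR2 (Γ Δ : List Formula) (P Q : Formula) :
      Deriv (Γ, Q :: Δ) → Deriv (Γ, (P.or Q) :: Δ)
  | orL (Γ Δ : List Formula) (P Q : Formula) :
      Deriv (Γ ++ [P], Δ) → Deriv (Γ ++ [Q], Δ) → Deriv (Γ ++ [P.or Q], Δ)
  | impR (Γ Δ : List Formula) (P Q : Formula) :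
      Deriv (Γ ++ [P], Q :: Δ) → Deriv (Γ, (P.imp Q) :: Δ)
  | impL (Γ Δ : List Formula) (P Q : Formula) :
      Deriv (Γ, P :: Δ) → Deriv (Γ ++ [Q], Δ) → Deriv (Γ ++ [P.imp Q], Δ)
  | negL (Γ Δ : List Formula) (P : Formula) :
      Deriv (Γ, P :: Δ) → Deriv (Γ ++ [P.neg], Δ)
  | negR (Γ Δ : List Formula) (P : Formula) :
      Deriv (Γ ++ [P], Δ) → Deriv (Γ, P.neg :: Δ)

/-- The degree of a derivation: the maximum of the degrees of the cut
formulas occurring in it (`0` if there is no cut). -/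
def Deriv.degree : ∀ {S : Sequent}, Deriv S → ℕ
  | _, .hyp _ => 0
  | _, .ax _ => 0
  | _, .permL _ _ _ _ _ d => Deriv.degree d
  | _, .permR _ _ _ _ _ d => Deriv.degree d
  | _, .contL _ _ _ d => Deriv.degree d
  | _, .contR _ _ _ d => Deriv.degree d
  | _, .weakL _ _ _ d => Deriv.degree d
  | _, .weakR _ _ _ d => Deriv.degree d
  | _, .cut _ _ _ _ P d₁ d₂ => max P.degree (max (Deriv.degree d₁) (Deriv.degree d₂))
  | _, .andL1 _ _ _ _ d => Deriv.degree d
  | _, .andL2 _ _ _ _ d => Deriv.degree d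
  | _, .andR _ _ _ _ d₁ d₂ => max (Deriv.degree d₁) (Deriv.degree d₂)
  | _, .orR1 _ _ _ _ d => Deriv.degree d
  | _, .orR2 _ _ _ _ d => Deriv.degree d
  | _, .orL _ _ _ _ d₁ d₂ => max (Deriv.degree d₁) (Deriv.degree d₂)
  | _, .impR _ _ _ _ d => Deriv.degree d
  | _, .impL _ _ _ _ d₁ d₂ => max (Deriv.degree d₁) (Deriv.degree d₂)
  | _, .negL _ _ _ d => Deriv.degree d
  | _, .negR _ _ _ d => Deriv.degree d

/-- A derivation is a proof when all of its leaves are axiom instances,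
i.e. it has no open hypothesis. -/
def Deriv.isProof : ∀ {S : Sequent}, Deriv S → Prop
  | _, .hyp _ => False
  | _, .ax _ => True
  | _, .permL _ _ _ _ _ d => Deriv.isProof d
  | _, .permR _ _ _ _ _ d => Deriv.isProof d
  | _, .contL _ _ _ d => Deriv.isProof d
  | _, .contR _ _ _ d => Deriv.isProof d
  | _, .weakL _ _ _ d => Deriv.isProof d
  | _, .weakR _ _ _ d => Deriv.isProof d
  | _, .cut _ _ _ _ _ d₁ d₂ => Deriv.isProof d₁ ∧ Deriv.isProof d₂
  | _, .andL1 _ _ _ _ d => Deriv.isProof d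
  | _, .andL2 _ _ _ _ d => Deriv.isProof d
  | _, .andR _ _ _ _ d₁ d₂ => Deriv.isProof d₁ ∧ Deriv.isProof d₂
  | _, .orR1 _ _ _ _ d => Deriv.isProof d
  | _, .orR2 _ _ _ _ d => Deriv.isProof d
  | _, .orL _ _ _ _ d₁ d₂ => Deriv.isProof d₁ ∧ Deriv.isProof d₂
  | _, .impR _ _ _ _ d => Deriv.isProof d
  | _, .impL _ _ _ _ d₁ d₂ => Deriv.isProof d₁ ∧ Deriv.isProof d₂
  | _, .negL _ _ _ d => Deriv.isProof d
  | _, .negR _ _ _ d => Deriv.isProof d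

/-- The list of open premises (hypothesis leaves) of a derivation. -/
def Deriv.prems : ∀ {S : Sequent}, Deriv S → List Sequent
  | _, .hyp S => [S]
  | _, .ax _ => []
  | _, .permL _ _ _ _ _ d => Deriv.prems d
  | _, .permR _ _ _ _ _ d => Deriv.prems d
  | _, .contL _ _ _ d => Deriv.prems d
  | _, .contR _ _ _ d => Deriv.prems d
  | _, .weakL _ _ _ d => Deriv.prems d
  | _, .weakR _ _ _ d => Deriv.prems d
  | _, .cut _ _ _ _ _ d₁ d₂ => Deriv.prems d₁ ++ Deriv.prems d₂
  | _, .andL1 _ _ _ _ d => Deriv.prems d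
  | _, .andL2 _ _ _ _ d => Deriv.prems d
  | _, .andR _ _ _ _ d₁ d₂ => Deriv.prems d₁ ++ Deriv.prems d₂
  | _, .orR1 _ _ _ _ d => Deriv.prems d
  | _, .orR2 _ _ _ _ d => Deriv.prems d
  | _, .orL _ _ _ _ d₁ d₂ => Deriv.prems d₁ ++ Deriv.prems d₂
  | _, .impR _ _ _ _ d => Deriv.prems d
  | _, .impL _ _ _ _ d₁ d₂ => Deriv.prems d₁ ++ Deriv.prems d₂
  | _, .negL _ _ _ d => Deriv.prems d
  | _, .negR _ _ _ d => Deriv.prems d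

/-- A derivation is cut-free when it contains no instance of the cut rule. -/
def Deriv.cutFree : ∀ {S : Sequent}, Deriv S → Prop
  | _, .hyp _ => True
  | _, .ax _ => True
  | _, .permL _ _ _ _ _ d => Deriv.cutFree d
  | _, .permR _ _ _ _ _ d => Deriv.cutFree d
  | _, .contL _ _ _ d => Deriv.cutFree d
  | _, .contR _ _ _ d => Deriv.cutFree d
  | _, .weakL _ _ _ d => Deriv.cutFree d
  | _, .weakR _ _ _ d => Deriv.cutFree d
  | _, .cut _ _ _ _ _ _ _ => False
  | _, .andL1 _ _ _ _ d => Deriv.cutFree d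
  | _, .andL2 _ _ _ _ d => Deriv.cutFree d
  | _, .andR _ _ _ _ d₁ d₂ => Deriv.cutFree d₁ ∧ Deriv.cutFree d₂
  | _, .orR1 _ _ _ _ d => Deriv.cutFree d
  | _, .orR2 _ _ _ _ d => Deriv.cutFree d
  | _, .orL _ _ _ _ d₁ d₂ => Deriv.cutFree d₁ ∧ Deriv.cutFree d₂
  | _, .impR _ _ _ _ d => Deriv.cutFree d
  | _, .impL _ _ _ _ d₁ d₂ => Deriv.cutFree d₁ ∧ Deriv.cutFree d₂
  | _, .negL _ _ _ d => Deriv.cutFree d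
  | _, .negR _ _ _ d => Deriv.cutFree d

end LKp

namespace LKp

/-! ### Two-valued semantics and soundness -/

/-- Truth value of a formula under a valuation of the atoms. -/
def Formula.eval (v : ℕ → Prop) : Formula → Prop
  | .atom a => v a
  | .neg A => ¬ A.eval v
  | .and A B => A.eval v ∧ B.eval v
  | .or A B => A.eval v ∨ B.eval v
  | .imp A B => A.eval v → B.eval v

/-- Validity of `Γ ⊢ Δ`: every valuation making all of `Γ` true makes some formula of `Δ` true. -/
def Valid (Γ Δ : List Formula) : Prop :=
  ∀ v, (∀ A ∈ Γ, A.eval v) → ∃ B ∈ Δ, B.eval v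

theorem Deriv.sound : ∀ {S : Sequent} (Φ : Deriv S), Φ.isProof → Valid S.1 S.2 := by
  intro S Φ
  induction Φ with
  | hyp S => exact fun h => h.elim
  | ax P => intro _ v h; exact ⟨P, by simp, h P (by simp)⟩
  | cut Γ Δ Γ' Δ' P d₁ d₂ ih₁ ih₂ =>
    intro h v hv
    have h₁ := ih₁ h.1 v
    have h₂ := ih₂ h.2 v
    simp only [List.mem_append, List.mem_cons, List.mem_nil_iff] at *
    grind
  | permL _ _ _ _ _ _ ih | permR _ _ _ _ _ _ ih | contL _ _ _ _ ih | contR _ _ _ _ ih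
  | weakL _ _ _ _ ih | weakR _ _ _ _ ih | andL1 _ _ _ _ _ ih | andL2 _ _ _ _ _ ih
  | orR1 _ _ _ _ _ ih | orR2 _ _ _ _ _ ih | impR _ _ _ _ _ ih | negL _ _ _ _ ih
  | negR _ _ _ _ ih =>
    intro h v hv
    have h₁ := ih h v
    simp only [List.mem_append, List.mem_cons, List.mem_nil_iff, or_false, or_imp, forall_and,
      forall_eq, or_and_right, exists_or, exists_eq_left, Formula.eval] at hv h₁ ⊢
    grind
  | andR _ _ _ _ _ _ ih₁ ih₂ | orL _ _ _ _ _ _ ih₁ ih₂ | impL _ _ _ _ _ _ ih₁ ih₂ =>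
    intro h v hv
    have h₁ := ih₁ h.1 v
    have h₂ := ih₂ h.2 v
    simp only [List.mem_append, List.mem_cons, List.mem_nil_iff, or_false, or_imp, forall_and,
      forall_eq, or_and_right, exists_or, exists_eq_left, Formula.eval] at hv h₁ h₂ ⊢
    grind

/-! ### Cut-free provability -/

/-- `Γ ⊢ Δ` has a proof of degree `0`; as formulas have positive degree, this means a proof
without cuts. -/
def Prov (Γ Δ : List Formula) : Prop :=
  ∃ Φ : Deriv (Γ, Δ), Φ.isProof ∧ Φ.degree = 0

/-- The prefix `Θ` is carried along because the permutation rule exchanges two neighbouring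
formulas at an arbitrary depth. -/
theorem Prov.perm_left_aux {Γ Γ' Δ : List Formula} (h : Γ.Perm Γ') :
    ∀ Θ, Prov (Θ ++ Γ) Δ → Prov (Θ ++ Γ') Δ := by
  induction h with
  | nil => exact fun _ h => h
  | cons x _ ih => intro Θ h; simpa using ih (Θ ++ [x]) (by simpa using h)
  | swap x y l => rintro Θ ⟨Φ, h⟩; exact ⟨.permL _ _ _ _ _ Φ, h⟩
  | trans _ _ ih₁ ih₂ => exact fun Θ h => ih₂ Θ (ih₁ Θ h)

theorem Prov.perm_right_aux {Γ Δ Δ' : List Formula} (h : Δ.Perm Δ') :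
    ∀ Θ, Prov Γ (Θ ++ Δ) → Prov Γ (Θ ++ Δ') := by
  induction h with
  | nil => exact fun _ h => h
  | cons x _ ih => intro Θ h; simpa using ih (Θ ++ [x]) (by simpa using h)
  | swap x y l => rintro Θ ⟨Φ, h⟩; exact ⟨.permR _ _ _ _ _ Φ, h⟩
  | trans _ _ ih₁ ih₂ => exact fun Θ h => ih₂ Θ (ih₁ Θ h)

theorem Prov.perm_left {Γ Γ' Δ : List Formula} (h : Prov Γ Δ) (hp : Γ.Perm Γ') : Prov Γ' Δ :=
  Prov.perm_left_aux hp [] h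

theorem Prov.perm_right {Γ Δ Δ' : List Formula} (h : Prov Γ Δ) (hp : Δ.Perm Δ') : Prov Γ Δ' :=
  Prov.perm_right_aux hp [] h

theorem Prov.weak_left {Γ Δ : List Formula} (h : Prov Γ Δ) (Θ : List Formula) :
    Prov (Γ ++ Θ) Δ := by
  induction Θ generalizing Γ with
  | nil => simpa using h
  | cons A Θ ih =>
    obtain ⟨Φ, h⟩ := h
    simpa using ih (Γ := Γ ++ [A]) ⟨.weakL _ _ A Φ, h⟩

theorem Prov.weak_right {Γ Δ : List Formula} (h : Prov Γ Δ) (Θ : List Formula) :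
    Prov Γ (Θ ++ Δ) := by
  induction Θ with
  | nil => exact h
  | cons A Θ ih =>
    obtain ⟨Φ, h⟩ := ih
    exact ⟨.weakR _ _ A Φ, h⟩

theorem Prov.absorb_left {Γ Δ : List Formula} (Θ : List Formula) (hs : Θ ⊆ Γ)
    (h : Prov (Θ ++ Γ) Δ) : Prov Γ Δ := by
  induction Θ with
  | nil => exact h
  | cons A Θ ih =>
    have hA : A ∈ Θ ++ Γ := List.mem_append_right _ (hs (by simp))
    have hp := List.perm_cons_erase hA
    obtain ⟨Φ, h'⟩ := h.perm_left (Γ' := (Θ ++ Γ).erase A ++ [A, A])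
      ((hp.cons A).trans (List.perm_append_comm (l₁ := [A, A])))
    refine ih (fun x hx => hs (by simp [hx])) ?_
    exact Prov.perm_left (Γ := (Θ ++ Γ).erase A ++ [A]) ⟨.contL _ _ A Φ, h'⟩
      ((List.perm_append_comm (l₂ := [A])).trans hp.symm)

theorem Prov.absorb_right {Γ Δ : List Formula} (Θ : List Formula) (hs : Θ ⊆ Δ)
    (h : Prov Γ (Θ ++ Δ)) : Prov Γ Δ := by
  induction Θ with
  | nil => exact h
  | cons A Θ ih =>
    have hA : A ∈ Θ ++ Δ := List.mem_append_right _ (hs (by simp))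
    have hp := List.perm_cons_erase hA
    obtain ⟨Φ, h'⟩ := h.perm_right (Δ' := A :: A :: (Θ ++ Δ).erase A) (hp.cons A)
    refine ih (fun x hx => hs (by simp [hx])) ?_
    exact Prov.perm_right (Δ := A :: (Θ ++ Δ).erase A) ⟨.contR _ _ A Φ, h'⟩ hp.symm

/-- The structural rules make cut-free provability depend monotonically on the underlying sets of
formulas only. -/
theorem Prov.mono {Γ Γ' Δ Δ' : List Formula} (h : Prov Γ Δ) (hΓ : Γ ⊆ Γ') (hΔ : Δ ⊆ Δ') :
    Prov Γ' Δ' :=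
  .absorb_right Δ hΔ <| .perm_right (Prov.weak_right (.absorb_left Γ hΓ (h.weak_left Γ')) Δ')
    List.perm_append_comm

/-! ### Logical rules in invertible form -/

theorem Prov.negL {Γ Δ : List Formula} {A : Formula} (h : Prov Γ (A :: Δ)) :
    Prov (A.neg :: Γ) Δ := by
  obtain ⟨Φ, h⟩ := h
  exact Prov.mono (Γ := Γ ++ [A.neg]) ⟨.negL _ _ _ Φ, h⟩ (by simp) (by simp)

theorem Prov.negR {Γ Δ : List Formula} {A : Formula} (h : Prov (A :: Γ) Δ) :
    Prov Γ (A.neg :: Δ) := by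
  obtain ⟨Φ, h⟩ := h.mono (Γ' := Γ ++ [A]) (by simp) (List.Subset.refl _)
  exact ⟨.negR _ _ _ Φ, h⟩

/-- The additive rules for the two conjuncts are applied in turn, the second conjunct being kept as
a side formula while the first one is treated; `Prov.mono` performs the final contraction. -/
theorem Prov.andL {Γ Δ : List Formula} {A B : Formula} (h : Prov (A :: B :: Γ) Δ) :
    Prov (A.and B :: Γ) Δ := by
  obtain ⟨Φ, h⟩ := h.mono (Γ' := (B :: Γ) ++ [A]) (by simp) (List.Subset.refl _)
  have h₁ : Prov ((B :: Γ) ++ [A.and B]) Δ := ⟨.andL1 _ _ _ _ Φ, h⟩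
  obtain ⟨Φ', h'⟩ := h₁.mono (Γ' := (A.and B :: Γ) ++ [B]) (by simp) (List.Subset.refl _)
  exact Prov.mono (Γ := (A.and B :: Γ) ++ [A.and B]) ⟨.andL2 _ _ _ _ Φ', h'⟩
    (by simp) (by simp)

theorem Prov.andR {Γ Δ : List Formula} {A B : Formula} (h₁ : Prov Γ (A :: Δ))
    (h₂ : Prov Γ (B :: Δ)) : Prov Γ (A.and B :: Δ) := by
  obtain ⟨Φ₁, h₁, e₁⟩ := h₁
  obtain ⟨Φ₂, h₂, e₂⟩ := h₂
  exact ⟨.andR _ _ _ _ Φ₁ Φ₂, ⟨h₁, h₂⟩, by simp [Deriv.degree, e₁, e₂]⟩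

theorem Prov.orL {Γ Δ : List Formula} {A B : Formula} (h₁ : Prov (A :: Γ) Δ)
    (h₂ : Prov (B :: Γ) Δ) : Prov (A.or B :: Γ) Δ := by
  obtain ⟨Φ₁, h₁, e₁⟩ := h₁.mono (Γ' := Γ ++ [A]) (by simp) (List.Subset.refl _)
  obtain ⟨Φ₂, h₂, e₂⟩ := h₂.mono (Γ' := Γ ++ [B]) (by simp) (List.Subset.refl _)
  exact Prov.mono (Γ := Γ ++ [A.or B])
    ⟨.orL _ _ _ _ Φ₁ Φ₂, ⟨h₁, h₂⟩, by simp [Deriv.degree, e₁, e₂]⟩ (by simp) (by simp)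

theorem Prov.orR {Γ Δ : List Formula} {A B : Formula} (h : Prov Γ (A :: B :: Δ)) :
    Prov Γ (A.or B :: Δ) := by
  obtain ⟨Φ, h⟩ := h
  have h₁ : Prov Γ (A.or B :: B :: Δ) := ⟨.orR1 _ _ _ _ Φ, h⟩
  obtain ⟨Φ', h'⟩ := h₁.mono (Δ' := B :: A.or B :: Δ) (List.Subset.refl _) (by simp)
  exact Prov.mono (Δ := A.or B :: A.or B :: Δ) ⟨.orR2 _ _ _ _ Φ', h'⟩ (by simp) (by simp)

theorem Prov.impL {Γ Δ : List Formula} {A B : Formula} (h₁ : Prov Γ (A :: Δ))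
    (h₂ : Prov (B :: Γ) Δ) : Prov (A.imp B :: Γ) Δ := by
  obtain ⟨Φ₁, h₁, e₁⟩ := h₁
  obtain ⟨Φ₂, h₂, e₂⟩ := h₂.mono (Γ' := Γ ++ [B]) (by simp) (List.Subset.refl _)
  exact Prov.mono (Γ := Γ ++ [A.imp B])
    ⟨.impL _ _ _ _ Φ₁ Φ₂, ⟨h₁, h₂⟩, by simp [Deriv.degree, e₁, e₂]⟩ (by simp) (by simp)

theorem Prov.impR {Γ Δ : List Formula} {A B : Formula} (h : Prov (A :: Γ) (B :: Δ)) :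
    Prov Γ (A.imp B :: Δ) := by
  obtain ⟨Φ, h⟩ := h.mono (Γ' := Γ ++ [A]) (by simp) (List.Subset.refl _)
  exact ⟨.impR _ _ _ _ Φ, h⟩

/-! ### Completeness without cuts -/

/-- Number of connectives of a formula. -/
def Formula.size : Formula → ℕ
  | .atom _ => 0
  | .neg A => A.size + 1
  | .and A B => A.size + B.size + 1
  | .or A B => A.size + B.size + 1
  | .imp A B => A.size + B.size + 1

/-- Number of connectives of a list of formulas. -/
def lsize (Γ : List Formula) : ℕ := (Γ.map Formula.size).sum

@[simp] theorem lsize_cons (A : Formula) (Γ : List Formula) :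
    lsize (A :: Γ) = A.size + lsize Γ := by simp [lsize]

theorem lsize_perm {Γ Γ' : List Formula} (h : Γ.Perm Γ') : lsize Γ = lsize Γ' :=
  (h.map _).sum_eq

/-- In the valuation making exactly the atoms of `Γ` true, validity exhibits an atom of `Δ` that
also lies in `Γ`. -/
theorem prov_of_valid_atoms {Γ Δ : List Formula} (hΓ : ∀ A ∈ Γ, A.size = 0)
    (hΔ : ∀ A ∈ Δ, A.size = 0) (h : Valid Γ Δ) : Prov Γ Δ := by
  obtain ⟨B, hB, hv⟩ := h (fun a => Formula.atom a ∈ Γ) (by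
    intro A hA
    have := hΓ A hA
    cases A <;> simp_all [Formula.size, Formula.eval])
  have := hΔ B hB
  cases B with
  | atom a =>
    exact Prov.mono (Γ := [.atom a]) (Δ := [.atom a]) ⟨.ax _, trivial, rfl⟩
      (by simpa [Formula.eval] using hv) (by simpa using hB)
  | neg _ | and _ _ | or _ _ | imp _ _ => simp [Formula.size] at this

/-- Completeness of cut-free LKp, by induction on the number of connectives in the sequent. -/
theorem prov_of_valid : ∀ (n : ℕ) (Γ Δ : List Formula), lsize Γ + lsize Δ = n →
    Valid Γ Δ → Prov Γ Δ := by
  intro n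
  induction n using Nat.strong_induction_on with
  | _ n ih =>
  intro Γ Δ hn hv
  by_cases hΓ : ∀ A ∈ Γ, A.size = 0
  · by_cases hΔ : ∀ A ∈ Δ, A.size = 0
    · exact prov_of_valid_atoms hΓ hΔ hv
    · push Not at hΔ
      obtain ⟨F, hF, hs⟩ := hΔ
      have hp := List.perm_cons_erase hF
      generalize Δ.erase F = Δ₀ at hp
      have hl := lsize_perm hp
      refine Prov.perm_right ?_ hp.symm
      have hv' : Valid Γ (F :: Δ₀) := fun v h => by
        simpa only [hp.mem_iff] using hv v h
      rw [lsize_cons] at hl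
      cases F with
      | atom a => exact absurd rfl hs
      | neg A =>
        refine .negR (ih _ ?_ _ _ rfl ?_)
        · simp only [lsize_cons, Formula.size] at *; omega
        · intro v
          have := hv' v
          simp only [List.forall_mem_cons, List.exists_mem_cons_iff, Formula.eval] at this ⊢
          clear ih; tauto
      | and A B =>
        refine .andR (ih _ ?_ _ _ rfl ?_) (ih _ ?_ _ _ rfl ?_)
        · simp only [lsize_cons, Formula.size] at *; omega
        · intro v
          have := hv' v
          simp only [List.exists_mem_cons_iff, Formula.eval] at this ⊢
          clear ih; tauto
        · simp only [lsize_cons, Formula.size] at *; omega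
        · intro v
          have := hv' v
          simp only [List.exists_mem_cons_iff, Formula.eval] at this ⊢
          clear ih; tauto
      | or A B =>
        refine .orR (ih _ ?_ _ _ rfl ?_)
        · simp only [lsize_cons, Formula.size] at *; omega
        · intro v
          have := hv' v
          simp only [List.exists_mem_cons_iff, Formula.eval] at this ⊢
          clear ih; tauto
      | imp A B =>
        refine .impR (ih _ ?_ _ _ rfl ?_)
        · simp only [lsize_cons, Formula.size] at *; omega
        · intro v
          have := hv' v
          simp only [List.forall_mem_cons, List.exists_mem_cons_iff, Formula.eval] at this ⊢
          clear ih; tauto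
  · push Not at hΓ
    obtain ⟨F, hF, hs⟩ := hΓ
    have hp := List.perm_cons_erase hF
    generalize Γ.erase F = Γ₀ at hp
    have hl := lsize_perm hp
    refine Prov.perm_left ?_ hp.symm
    have hv' : Valid (F :: Γ₀) Δ := fun v h => hv v (by simpa only [hp.mem_iff] using h)
    rw [lsize_cons] at hl
    cases F with
    | atom a => exact absurd rfl hs
    | neg A =>
      refine .negL (ih _ ?_ _ _ rfl ?_)
      · simp only [lsize_cons, Formula.size] at *; omega
      · intro v
        have := hv' v
        simp only [List.forall_mem_cons, List.exists_mem_cons_iff, Formula.eval] at this ⊢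
        clear ih; tauto
    | and A B =>
      refine .andL (ih _ ?_ _ _ rfl ?_)
      · simp only [lsize_cons, Formula.size] at *; omega
      · intro v
        have := hv' v
        simp only [List.forall_mem_cons, Formula.eval] at this ⊢
        clear ih; tauto
    | or A B =>
      refine .orL (ih _ ?_ _ _ rfl ?_) (ih _ ?_ _ _ rfl ?_)
      · simp only [lsize_cons, Formula.size] at *; omega
      · intro v
        have := hv' v
        simp only [List.forall_mem_cons, Formula.eval] at this ⊢
        clear ih; tauto
      · simp only [lsize_cons, Formula.size] at *; omega
      · intro v
        have := hv' v
        simp only [List.forall_mem_cons, Formula.eval] at this ⊢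
        clear ih; tauto
    | imp A B =>
      refine .impL (ih _ ?_ _ _ rfl ?_) (ih _ ?_ _ _ rfl ?_)
      · simp only [lsize_cons, Formula.size] at *; omega
      · intro v
        have := hv' v
        simp only [List.forall_mem_cons, List.exists_mem_cons_iff, Formula.eval] at this ⊢
        clear ih; tauto
      · simp only [lsize_cons, Formula.size] at *; omega
      · intro v
        have := hv' v
        simp only [List.forall_mem_cons, Formula.eval] at this ⊢
        clear ih; tauto

theorem Formula.degree_pos (P : Formula) : 0 < P.degree := by
  cases P <;> simp [Formula.degree]

/-- Lemma 2 of the cut-elimination argument.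
Let `P` be a formula of degree `d`, let `Φ` be a proof in LKp of `Γ ⊢ Δ` and
`Φ'` a proof in LKp of `Γ' ⊢ Δ'`, both of degree strictly less than `d`.
Then there is a proof `Ψ` in LKp of `Γ, Γ'∖P ⊢ Δ∖P, Δ'` of degree strictly
less than `d`, where `Λ∖P` removes all occurrences of `P` from the list `Λ`. -/
theorem mix_lemma (P : Formula) (d : ℕ) (hP : P.degree = d)
    (Γ Δ Γ' Δ' : List Formula)
    (Φ : Deriv (Γ, Δ)) (Φ' : Deriv (Γ', Δ'))
    (hΦ : Φ.isProof) (hΦ' : Φ'.isProof)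
    (hdeg : Φ.degree < d) (hdeg' : Φ'.degree < d) :
    ∃ Ψ : Deriv (Γ ++ Γ'.filter (· ≠ P), Δ.filter (· ≠ P) ++ Δ'),
      Ψ.isProof ∧ Ψ.degree < d := by
  have hv : Valid (Γ ++ Γ'.filter (· ≠ P)) (Δ.filter (· ≠ P) ++ Δ') := by
    intro v h
    have h₁ := Φ.sound hΦ v
    have h₂ := Φ'.sound hΦ' v
    simp only [List.mem_append, List.mem_filter, decide_eq_true_eq] at *
    by_cases hPv : P.eval v <;> grind
  obtain ⟨Ψ, hΨ, hd⟩ := prov_of_valid _ _ _ rfl hv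
  exact ⟨Ψ, hΨ, by rw [hd, ← hP]; exact P.degree_pos⟩

end LKp
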